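/- Let r > 0 and let n be an integer satisfying condition (⋆). Let u, v ∈ X_r, let w_u ∈ X_r satisfy √n·w_u − (1/p⁰)Q(w_u,w_u) = u, and set Q_n(u,u) = n√n·w_u − n·u. Then ‖Q_n(u,u) − (1/p⁰)Q(v,v)‖ ≤ 4Cr·(2Cr²/n + ‖u − v‖). In particular (taking u = v), the approximating operators Q_n converge pointwise on X_r in the L¹-norm to (1/p⁰)Q. -/

import Mathlib

/-!
By the equation for `w = w_u`, `Q_n(u,u) = n Q(w,w)/p⁰ = Q(F,F)/p⁰` with `F = √n w`, so the claim
compares the weighted collision operator at `F` and at `v`. Three facts give the estimate.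

* `Q_lipschitz`: `‖(Q(f,f) - Q(g,g))/p⁰‖ ≤ 2C(‖f‖ + ‖g‖)‖f - g‖`.
* `Q_mass`: `∫ Q(f,f)/p⁰ = 0`, which for `w, u ≥ 0` yields `‖F‖ = ‖u‖ ≤ r`, i.e. `‖w‖ ≤ r/√n`.
* `F - u = Q(w,w)/p⁰`, so `‖F - v‖ ≤ 2C‖w‖² + ‖u - v‖ ≤ 2Cr²/n + ‖u - v‖`.

The first two rest on the invariance of `dp dq/(p⁰q⁰)` under the collision map for fixed `ω`
(`collision_3d`). Only the momentum components along `ω̂` change, and the orthogonal components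
act as rest masses `m`, `M`; this reduces the claim to a collision of two particles on a line
(`collision_1d`). In rapidities `x = m sinh θ`, `y = M sinh φ` the measure becomes `dθ dφ`, and
with `δ = φ - θ` the collision is `(θ, δ) ↦ (θ + s(δ), -δ)` for an explicit odd function `s`, which
is an involution preserving Lebesgue measure.
-/

open MeasureTheory Real

noncomputable section

/-- Momentum space `ℝ³`. -/
abbrev E3 : Type := EuclideanSpace ℝ (Fin 3)

/-- The scalar product associated with the Bianchi type I metric coefficients `α = a(t)`,
`β = b(t)`: `p̄·q̄ = α²p¹q¹ + β²(p²q² + p³q³)`. -/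
def mdot (α β : ℝ) (p q : E3) : ℝ :=
  α ^ 2 * p 0 * q 0 + β ^ 2 * (p 1 * q 1 + p 2 * q 2)

/-- `p⁰ = √(1 + |p̄|²)` where `|p̄|² = p̄·p̄`. -/
def pZ (α β : ℝ) (p : E3) : ℝ := Real.sqrt (1 + mdot α β p p)

/-- `ω` normalized to unit length for the metric norm. -/
def omHat (α β : ℝ) (ω : E3) : E3 := (Real.sqrt (mdot α β ω ω))⁻¹ • ω

/-- The total energy `e = p⁰ + q⁰`. -/
def collE (α β : ℝ) (p q : E3) : ℝ := pZ α β p + pZ α β q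

/-- The function `C(p̄, q̄, ω)` of Glassey's representation of post-collisional momenta. -/
def collC (α β : ℝ) (p q ω : E3) : ℝ :=
  2 * pZ α β p * pZ α β q * collE α β p q *
      mdot α β (omHat α β ω) ((pZ α β q)⁻¹ • q - (pZ α β p)⁻¹ • p) /
    (collE α β p q ^ 2 - mdot α β (omHat α β ω) (p + q) ^ 2)

/-- The post-collisional momentum `p̄′ = p̄ + C(p̄,q̄,ω)ω̂`. -/
def pPr (α β : ℝ) (p q ω : E3) : E3 := p + collC α β p q ω • omHat α β ω

/-- The post-collisional momentum `q̄′ = q̄ − C(p̄,q̄,ω)ω̂`. -/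
def qPr (α β : ℝ) (p q ω : E3) : E3 := q - collC α β p q ω • omHat α β ω

/-- The surface measure on the unit sphere `S² ⊂ ℝ³`. -/
def sphMeas : Measure (Metric.sphere (0 : E3) 1) := (volume : Measure E3).toSphere

/-- The gain term `Q⁺(f,g)`. -/
def Qplus (α β : ℝ) (S₀ : E3 → E3 → E3 → E3 → ℝ) (f g : E3 → ℝ) (p : E3) : ℝ :=
  α * β ^ 2 *
    ∫ q : E3, (pZ α β q)⁻¹ *
      ∫ ω : Metric.sphere (0 : E3) 1,
        f (pPr α β p q ω) * g (qPr α β p q ω) *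
          S₀ p q (pPr α β p q ω) (qPr α β p q ω) ∂sphMeas

/-- The loss term `Q⁻(f,g)`. -/
def Qminus (α β : ℝ) (S₀ : E3 → E3 → E3 → E3 → ℝ) (f g : E3 → ℝ) (p : E3) : ℝ :=
  α * β ^ 2 *
    ∫ q : E3, (pZ α β q)⁻¹ *
      ∫ ω : Metric.sphere (0 : E3) 1,
        f p * g q * S₀ p q (pPr α β p q ω) (qPr α β p q ω) ∂sphMeas

/-- The collision operator `Q = Q⁺ − Q⁻`. -/
def Qcoll (α β : ℝ) (S₀ : E3 → E3 → E3 → E3 → ℝ) (f g : E3 → ℝ) (p : E3) : ℝ :=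
  Qplus α β S₀ f g p - Qminus α β S₀ f g p

/-- The space `L¹(ℝ³)`. -/
abbrev L1 : Type := Lp ℝ 1 (volume : Measure E3)

/-- Membership in `X_r = {f ∈ L¹(ℝ³) : f ≥ 0 a.e., ‖f‖ ≤ r}`. -/
def memX (r : ℝ) (f : L1) : Prop := (0 ≤ᵐ[volume] ⇑f) ∧ ‖f‖ ≤ r

end

/-! ### The one-dimensional collision in rapidity coordinates -/

/-- The momentum transfer in an elastic collision on the line of particles with rest masses
`m`, `M` and momenta `x`, `y`. The function `collC` reduces to it along the direction `ω̂`, the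
momentum orthogonal to `ω̂` being absorbed into the masses. -/
noncomputable def cc1 (m M x y : ℝ) : ℝ :=
  2 * (√(m ^ 2 + x ^ 2) + √(M ^ 2 + y ^ 2)) *
    (√(m ^ 2 + x ^ 2) * y - √(M ^ 2 + y ^ 2) * x) /
    ((√(m ^ 2 + x ^ 2) + √(M ^ 2 + y ^ 2)) ^ 2 - (x + y) ^ 2)

/-- The rapidity gained by the first particle when the second one has relative rapidity `δ`:
twice the rapidity of the centre of mass, seen from the first particle. -/
noncomputable def shiftR (m M δ : ℝ) : ℝ :=
  Real.log ((m + M * Real.exp δ) / (m + M * Real.exp (-δ)))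

lemma sqrt_mass {m : ℝ} (hm : 0 < m) (θ : ℝ) :
    √(m ^ 2 + (m * Real.sinh θ) ^ 2) = m * Real.cosh θ := by
  have : m ^ 2 + (m * Real.sinh θ) ^ 2 = (m * Real.cosh θ) ^ 2 := by
    have := Real.cosh_sq θ
    rw [mul_pow, mul_pow, this]; ring
  rw [this, Real.sqrt_sq (by have := Real.cosh_pos θ; positivity)]

lemma shiftR_neg {m M : ℝ} (δ : ℝ) : shiftR m M (-δ) = - shiftR m M δ := by
  unfold shiftR
  rw [← Real.log_inv, inv_div, neg_neg]

/-- In rapidities (`x = m sinh θ`, `y = M sinh (θ + δ)`) the collision is the shear-reflection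
`(θ, δ) ↦ (θ + shiftR δ, -δ)`. -/
lemma cc1_rap {m M : ℝ} (hm : 0 < m) (hM : 0 < M) (θ δ : ℝ) :
    m * Real.sinh θ + cc1 m M (m * Real.sinh θ) (M * Real.sinh (θ + δ)) =
      m * Real.sinh (θ + shiftR m M δ) ∧
    M * Real.sinh (θ + δ) - cc1 m M (m * Real.sinh θ) (M * Real.sinh (θ + δ)) =
      M * Real.sinh (θ + shiftR m M δ - δ) := by
  have hs : Real.exp (shiftR m M δ) = (m + M * Real.exp δ) / (m + M * Real.exp (-δ)) := by
    unfold shiftR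
    exact Real.exp_log (by positivity)
  unfold cc1
  rw [sqrt_mass hm, sqrt_mass hM]
  simp only [Real.sinh_eq, Real.cosh_eq, neg_add, Real.exp_add, Real.exp_sub, neg_sub, Real.exp_neg, hs]
  have hX := Real.exp_pos θ
  have hD := Real.exp_pos δ
  set X := Real.exp θ
  set D := Real.exp δ
  -- The square of the invariant mass, `E² - P² = (E + P)(E - P)`, is nonzero.
  have hden : (m * ((X + X⁻¹) / 2) + M * ((X * D + X⁻¹ * D⁻¹) / 2)) ^ 2 -
      (m * ((X - X⁻¹) / 2) + M * ((X * D - X⁻¹ * D⁻¹) / 2)) ^ 2 =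
      (m + M * D) * (m + M * D⁻¹) := by
    field_simp; ring
  rw [hden]
  constructor
  · field_simp
    ring
  · field_simp
    ring

/-- The invariant measure `dx / √(m² + x²)` is Lebesgue measure in the rapidity. -/
lemma lintegral_sinh {m : ℝ} (hm : 0 < m) (F : ℝ → ENNReal) :
    ∫⁻ x, F x * ENNReal.ofReal (√(m ^ 2 + x ^ 2))⁻¹ = ∫⁻ θ, F (m * Real.sinh θ) := by
  have hsurj : (fun θ => m * Real.sinh θ) '' Set.univ = Set.univ := by
    rw [Set.image_univ, Set.range_eq_univ]
    intro y
    obtain ⟨t, ht⟩ := Real.sinh_surjective (y / m)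
    exact ⟨t, by simp only [ht]; field_simp⟩
  have h := lintegral_image_eq_lintegral_abs_deriv_mul (s := Set.univ)
    (f := fun θ => m * Real.sinh θ) (f' := fun θ => m * Real.cosh θ) MeasurableSet.univ
    (fun x _ => ((Real.hasDerivAt_sinh x).const_mul m).hasDerivWithinAt)
    (by
      intro a _ b _ hab
      exact Real.sinh_injective (mul_left_cancel₀ hm.ne' hab))
    (fun x => F x * ENNReal.ofReal (√(m ^ 2 + x ^ 2))⁻¹)
  rw [hsurj] at h
  simp only [Measure.restrict_univ] at h
  rw [h]
  refine lintegral_congr fun θ => ?_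
  have hc : 0 < m * Real.cosh θ := mul_pos hm (Real.cosh_pos θ)
  rw [sqrt_mass hm, abs_of_pos hc, mul_comm (F _), ← mul_assoc, ← ENNReal.ofReal_mul hc.le,
    mul_inv_cancel₀ hc.ne', ENNReal.ofReal_one, one_mul]

/-- The collision on the line preserves `dx dy / (x⁰ y⁰)` and is an involution; both facts are
contained in the symmetry under exchange of pre- and post-collisional momenta. -/
lemma collision_1d {m M : ℝ} (hm : 0 < m) (hM : 0 < M) (G : ℝ → ℝ → ℝ → ℝ → ENNReal)
    (hG : Measurable fun z : (ℝ × ℝ) × ℝ × ℝ => G z.1.1 z.1.2 z.2.1 z.2.2) :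
    ∫⁻ x, ∫⁻ y, G x y (x + cc1 m M x y) (y - cc1 m M x y) *
        ENNReal.ofReal (√(m ^ 2 + x ^ 2))⁻¹ * ENNReal.ofReal (√(M ^ 2 + y ^ 2))⁻¹ =
    ∫⁻ x, ∫⁻ y, G (x + cc1 m M x y) (y - cc1 m M x y) x y *
        ENNReal.ofReal (√(m ^ 2 + x ^ 2))⁻¹ * ENNReal.ofReal (√(M ^ 2 + y ^ 2))⁻¹ := by
  have hsm : Measurable (shiftR m M) := by unfold shiftR; fun_prop
  have key : ∀ G' : ℝ → ℝ → ℝ → ℝ → ENNReal,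
      (Measurable fun z : (ℝ × ℝ) × ℝ × ℝ => G' z.1.1 z.1.2 z.2.1 z.2.2) →
      ∫⁻ x, ∫⁻ y, G' x y (x + cc1 m M x y) (y - cc1 m M x y) *
        ENNReal.ofReal (√(m ^ 2 + x ^ 2))⁻¹ * ENNReal.ofReal (√(M ^ 2 + y ^ 2))⁻¹ =
      ∫⁻ δ, ∫⁻ θ, G' (m * Real.sinh θ) (M * Real.sinh (θ + δ))
        (m * Real.sinh (θ + shiftR m M δ)) (M * Real.sinh (θ + shiftR m M δ - δ)) := by
    intro G' hG'
    have h1 : ∀ x, ∫⁻ y, G' x y (x + cc1 m M x y) (y - cc1 m M x y) *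
        ENNReal.ofReal (√(m ^ 2 + x ^ 2))⁻¹ * ENNReal.ofReal (√(M ^ 2 + y ^ 2))⁻¹ =
        (∫⁻ φ, G' x (M * Real.sinh φ) (x + cc1 m M x (M * Real.sinh φ))
          (M * Real.sinh φ - cc1 m M x (M * Real.sinh φ))) *
          ENNReal.ofReal (√(m ^ 2 + x ^ 2))⁻¹ := by
      intro x
      rw [lintegral_sinh hM (fun y => G' x y (x + cc1 m M x y) (y - cc1 m M x y) *
        ENNReal.ofReal (√(m ^ 2 + x ^ 2))⁻¹), lintegral_mul_const' _ _ ENNReal.ofReal_ne_top]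
    simp_rw [h1]
    rw [lintegral_sinh hm (fun x => ∫⁻ φ, G' x (M * Real.sinh φ)
      (x + cc1 m M x (M * Real.sinh φ)) (M * Real.sinh φ - cc1 m M x (M * Real.sinh φ)))]
    have h2 : ∀ θ, ∫⁻ φ, G' (m * Real.sinh θ) (M * Real.sinh φ)
        (m * Real.sinh θ + cc1 m M (m * Real.sinh θ) (M * Real.sinh φ))
        (M * Real.sinh φ - cc1 m M (m * Real.sinh θ) (M * Real.sinh φ)) =
        ∫⁻ δ, G' (m * Real.sinh θ) (M * Real.sinh (θ + δ))
        (m * Real.sinh (θ + shiftR m M δ)) (M * Real.sinh (θ + shiftR m M δ - δ)) := by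
      intro θ
      rw [← lintegral_add_left_eq_self _ θ]
      refine lintegral_congr fun δ => ?_
      rw [(cc1_rap hm hM θ δ).1, (cc1_rap hm hM θ δ).2]
    simp_rw [h2]
    rw [lintegral_lintegral_swap]
    refine Measurable.aemeasurable ?_
    have : Measurable fun z : ℝ × ℝ => (((m * Real.sinh z.1, M * Real.sinh (z.1 + z.2)),
      (m * Real.sinh (z.1 + shiftR m M z.2), M * Real.sinh (z.1 + shiftR m M z.2 - z.2))) :
        (ℝ × ℝ) × ℝ × ℝ) := by fun_prop
    exact hG'.comp this
  rw [key G hG, key (fun a b c d => G c d a b) (hG.comp measurable_swap)]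
  -- In rapidities: reflect `δ`, translate `θ` by `shiftR δ`, and use that `shiftR` is odd.
  rw [← lintegral_neg_eq_self]
  refine lintegral_congr fun δ => ?_
  rw [← lintegral_add_right_eq_self _ (shiftR m M δ)]
  refine lintegral_congr fun θ => ?_
  rw [shiftR_neg]
  congr 2 <;> ring_nf

/-! ### Splitting momentum space along the collision direction -/

lemma mdot_comm' (α β : ℝ) (p q : E3) : mdot α β p q = mdot α β q p := by
  unfold mdot; ring

lemma mdot_add_right' (α β : ℝ) (p q s : E3) :
    mdot α β p (q + s) = mdot α β p q + mdot α β p s := by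
  simp only [mdot, PiLp.add_apply]; ring

lemma mdot_smul_right' (α β c : ℝ) (p q : E3) :
    mdot α β p (c • q) = c * mdot α β p q := by
  simp only [mdot, PiLp.smul_apply, smul_eq_mul]; ring

lemma mdot_sub_right' (α β : ℝ) (p q s : E3) :
    mdot α β p (q - s) = mdot α β p q - mdot α β p s := by
  simp only [mdot, PiLp.sub_apply]; ring

lemma mdot_self_nonneg (α β : ℝ) (p : E3) : 0 ≤ mdot α β p p := by
  unfold mdot
  have : α ^ 2 * p 0 * p 0 + β ^ 2 * (p 1 * p 1 + p 2 * p 2) =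
    (α * p 0) ^ 2 + (β * p 1) ^ 2 + (β * p 2) ^ 2 := by ring
  rw [this]; positivity

lemma one_le_pZ (α β : ℝ) (p : E3) : 1 ≤ pZ α β p := by
  unfold pZ
  rw [Real.one_le_sqrt]
  linarith [mdot_self_nonneg α β p]

lemma mdot_omHat {α β : ℝ} (hα : 0 < α) (hβ : 0 < β) {ω : E3} (hω : ω ≠ 0) :
    mdot α β (omHat α β ω) (omHat α β ω) = 1 := by
  have h : 0 < mdot α β ω ω := by
    refine lt_of_le_of_ne (mdot_self_nonneg α β ω) fun h => hω ?_
    have h' : (α * ω 0) ^ 2 + (β * ω 1) ^ 2 + (β * ω 2) ^ 2 = 0 := by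
      rw [h]; unfold mdot; ring
    have h0 : α * ω 0 = 0 := by
      nlinarith [sq_nonneg (α * ω 0), sq_nonneg (β * ω 1), sq_nonneg (β * ω 2)]
    have h1 : β * ω 1 = 0 := by
      nlinarith [sq_nonneg (α * ω 0), sq_nonneg (β * ω 1), sq_nonneg (β * ω 2)]
    have h2 : β * ω 2 = 0 := by
      nlinarith [sq_nonneg (α * ω 0), sq_nonneg (β * ω 1), sq_nonneg (β * ω 2)]
    ext i
    fin_cases i
    · simpa [hα.ne'] using h0
    · simpa [hβ.ne'] using h1
    · simpa [hβ.ne'] using h2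
  unfold omHat
  rw [mdot_smul_right', mdot_comm' α β (_ • ω) ω, mdot_smul_right', ← mul_assoc, ← mul_inv,
    Real.mul_self_sqrt h.le, inv_mul_cancel₀ h.ne']

/-- The linear functional `p ↦ o·p` of the metric scalar product. -/
noncomputable def mdotL (α β : ℝ) (o : E3) : E3 →ₗ[ℝ] ℝ where
  toFun := mdot α β o
  map_add' := mdot_add_right' α β o
  map_smul' c p := mdot_smul_right' α β c o p

/-- The splitting `(x, k) ↦ x o + k` of momentum space along a metric unit vector `o` and its
metric-orthogonal complement. -/
noncomputable def splitE (α β : ℝ) (o : E3) (ho : mdot α β o o = 1) :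
    (ℝ × (mdotL α β o).ker) ≃ₗ[ℝ] E3 where
  toFun z := z.1 • o + (z.2 : E3)
  map_add' z z' := by simp [add_smul]; abel
  map_smul' c z := by simp [smul_smul]
  invFun p := (mdot α β o p, ⟨p - mdot α β o p • o, by
    simp [mdotL, LinearMap.mem_ker, mdot_sub_right', mdot_smul_right', ho]⟩)
  left_inv := by
    rintro ⟨x, k, hk⟩
    have hk' : mdot α β o k = 0 := hk
    simp [mdot_add_right', mdot_smul_right', ho, hk']
  right_inv p := by simp

/-- Tonelli along the splitting. The determinant `κ` of the splitting need not be identified,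
as it appears on both sides of the identity it is used for. -/
lemma lintegral_split (α β : ℝ) (o : E3) (ho : mdot α β o o = 1) :
    ∃ κ : NNReal, ∀ F : E3 → ENNReal, Measurable F →
      ∫⁻ p, F p = κ * ∫⁻ k : (mdotL α β o).ker, ∫⁻ x : ℝ, F (x • o + (k : E3)) := by
  let A := (splitE α β o ho).toContinuousLinearEquiv
  let ν : Measure (ℝ × (mdotL α β o).ker) := (volume : Measure ℝ).prod volume
  have : (Measure.map A ν).IsAddHaarMeasure := A.isAddHaarMeasure_map ν
  obtain ⟨κ, h⟩ : ∃ κ : NNReal, (volume : Measure E3) = κ • Measure.map A ν :=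
    ⟨_, Measure.isAddLeftInvariant_eq_smul (volume : Measure E3) (Measure.map A ν)⟩
  refine ⟨κ, fun F hF => ?_⟩
  rw [h, lintegral_smul_measure, lintegral_map hF A.continuous.measurable, lintegral_prod_symm]
  · rfl
  · exact (hF.comp A.continuous.measurable).aemeasurable

lemma measurable_mdot {X : Type*} [MeasurableSpace X] {f g : X → E3} (α β : ℝ)
    (hf : Measurable f) (hg : Measurable g) : Measurable fun x => mdot α β (f x) (g x) := by
  unfold mdot; fun_prop

lemma measurable_pZ {X : Type*} [MeasurableSpace X] {f : X → E3} (α β : ℝ)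
    (hf : Measurable f) : Measurable fun x => pZ α β (f x) := by
  unfold pZ
  exact (measurable_const.add (measurable_mdot α β hf hf)).sqrt

lemma measurable_omHat {X : Type*} [MeasurableSpace X] {f : X → E3} (α β : ℝ)
    (hf : Measurable f) : Measurable fun x => omHat α β (f x) := by
  unfold omHat
  exact (measurable_mdot α β hf hf).sqrt.inv.smul hf

lemma measurable_collC {X : Type*} [MeasurableSpace X] {f g h : X → E3} (α β : ℝ)
    (hf : Measurable f) (hg : Measurable g) (hh : Measurable h) :
    Measurable fun x => collC α β (f x) (g x) (h x) := by
  have h1 := measurable_pZ α β hf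
  have h2 := measurable_pZ α β hg
  have h3 := measurable_omHat α β hh
  have h4 := measurable_mdot α β h3 ((h2.inv.smul hg).sub (h1.inv.smul hf))
  have h5 := measurable_mdot α β h3 (hf.add hg)
  unfold collC collE
  exact ((((h1.const_mul 2).mul h2).mul (h1.add h2)).mul h4).div
    (((h1.add h2).pow_const 2).sub (h5.pow_const 2))

lemma measurable_pPr {X : Type*} [MeasurableSpace X] {f g h : X → E3} (α β : ℝ)
    (hf : Measurable f) (hg : Measurable g) (hh : Measurable h) :
    Measurable fun x => pPr α β (f x) (g x) (h x) :=
  hf.add ((measurable_collC α β hf hg hh).smul (measurable_omHat α β hh))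

lemma measurable_qPr {X : Type*} [MeasurableSpace X] {f g h : X → E3} (α β : ℝ)
    (hf : Measurable f) (hg : Measurable g) (hh : Measurable h) :
    Measurable fun x => qPr α β (f x) (g x) (h x) :=
  hg.sub ((measurable_collC α β hf hg hh).smul (measurable_omHat α β hh))

lemma pZ_split (α β : ℝ) {o k : E3} (ho : mdot α β o o = 1) (hk : mdot α β o k = 0) (x : ℝ) :
    pZ α β (x • o + k) = √((pZ α β k) ^ 2 + x ^ 2) := by
  have h0 : (pZ α β k) ^ 2 = 1 + mdot α β k k :=
    Real.sq_sqrt (by linarith [mdot_self_nonneg α β k])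
  rw [h0]
  unfold pZ
  congr 1
  rw [mdot_add_right', mdot_smul_right', mdot_comm' α β _ o, mdot_comm' α β _ k,
    mdot_add_right', mdot_smul_right', mdot_add_right', mdot_smul_right', mdot_comm' α β k o, ho, hk]
  ring

lemma collC_split (α β : ℝ) {ω k l : E3} (ho : mdot α β (omHat α β ω) (omHat α β ω) = 1)
    (hk : mdot α β (omHat α β ω) k = 0) (hl : mdot α β (omHat α β ω) l = 0) (x y : ℝ) :
    collC α β (x • omHat α β ω + k) (y • omHat α β ω + l) ω =
      cc1 (pZ α β k) (pZ α β l) x y := by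
  have hp := one_le_pZ α β (x • omHat α β ω + k)
  have hq := one_le_pZ α β (y • omHat α β ω + l)
  unfold collC collE cc1
  simp only [mdot_sub_right', mdot_smul_right', mdot_add_right', ho, hk, hl]
  rw [← pZ_split α β ho hk, ← pZ_split α β ho hl]
  congr 1
  · field_simp
    ring
  · ring

/-- For a fixed direction the collision map `(p, q) ↦ (p', q')` is an involution preserving
`dp dq / (p⁰ q⁰)`; stated as invariance of the integral under exchanging pre- and
post-collisional momenta. -/
lemma collision_3d {α β : ℝ} (hα : 0 < α) (hβ : 0 < β) {ω : E3} (hω : ω ≠ 0)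
    (G : E3 → E3 → E3 → E3 → ENNReal)
    (hG : Measurable fun z : (E3 × E3) × E3 × E3 => G z.1.1 z.1.2 z.2.1 z.2.2) :
    ∫⁻ p, ∫⁻ q, G p q (pPr α β p q ω) (qPr α β p q ω) *
        ENNReal.ofReal (pZ α β p)⁻¹ * ENNReal.ofReal (pZ α β q)⁻¹ =
    ∫⁻ p, ∫⁻ q, G (pPr α β p q ω) (qPr α β p q ω) p q *
        ENNReal.ofReal (pZ α β p)⁻¹ * ENNReal.ofReal (pZ α β q)⁻¹ := by
  have ho := mdot_omHat hα hβ hω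
  obtain ⟨κ, hκ⟩ := lintegral_split α β (omHat α β ω) ho
  -- `dp dq` in the coordinates `p = x ω̂ + k`, `q = y ω̂ + l`.
  have key : ∀ F : E3 → E3 → ENNReal, Measurable (Function.uncurry F) →
      ∫⁻ p, ∫⁻ q, F p q = κ * (κ * ∫⁻ k : (mdotL α β (omHat α β ω)).ker,
        ∫⁻ l : (mdotL α β (omHat α β ω)).ker, ∫⁻ x : ℝ, ∫⁻ y : ℝ,
          F (x • omHat α β ω + k) (y • omHat α β ω + l)) := by
    intro F hF
    rw [hκ _ hF.lintegral_prod_right]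
    have h1 : ∀ p, ∫⁻ q, F p q = κ * ∫⁻ l : (mdotL α β (omHat α β ω)).ker, ∫⁻ y : ℝ,
        F p (y • omHat α β ω + l) := fun p => hκ _ (hF.comp measurable_prodMk_left)
    simp_rw [h1]
    congr 1
    rw [← lintegral_const_mul' _ _ ENNReal.coe_ne_top]
    refine lintegral_congr fun k => ?_
    rw [lintegral_const_mul' _ _ ENNReal.coe_ne_top, lintegral_lintegral_swap]
    refine Measurable.aemeasurable (Measurable.lintegral_prod_right'
      (f := fun w : (ℝ × (mdotL α β (omHat α β ω)).ker) × ℝ =>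
        F (w.1.1 • omHat α β ω + k) (w.2 • omHat α β ω + w.1.2)) ?_)
    have : Measurable fun w : (ℝ × (mdotL α β (omHat α β ω)).ker) × ℝ =>
        ((w.1.1 • omHat α β ω + (k : E3), w.2 • omHat α β ω + (w.1.2 : E3)) : E3 × E3) := by
      fun_prop
    exact hF.comp this
  have mp : Measurable fun z : E3 × E3 => pPr α β z.1 z.2 ω :=
    measurable_pPr α β measurable_fst measurable_snd measurable_const
  have mq : Measurable fun z : E3 × E3 => qPr α β z.1 z.2 ω :=
    measurable_qPr α β measurable_fst measurable_snd measurable_const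
  have mw1 : Measurable fun z : E3 × E3 => ENNReal.ofReal (pZ α β z.1)⁻¹ :=
    (measurable_pZ α β measurable_fst).inv.ennreal_ofReal
  have mw2 : Measurable fun z : E3 × E3 => ENNReal.ofReal (pZ α β z.2)⁻¹ :=
    (measurable_pZ α β measurable_snd).inv.ennreal_ofReal
  rw [key (fun p q => G p q (pPr α β p q ω) (qPr α β p q ω) *
        ENNReal.ofReal (pZ α β p)⁻¹ * ENNReal.ofReal (pZ α β q)⁻¹)
      (((hG.comp (measurable_id.prodMk (mp.prodMk mq))).mul mw1).mul mw2),
    key (fun p q => G (pPr α β p q ω) (qPr α β p q ω) p q *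
        ENNReal.ofReal (pZ α β p)⁻¹ * ENNReal.ofReal (pZ α β q)⁻¹)
      (((hG.comp ((mp.prodMk mq).prodMk measurable_id)).mul mw1).mul mw2)]
  congr 2
  refine lintegral_congr fun k => lintegral_congr fun l => ?_
  have hk : mdot α β (omHat α β ω) k = 0 := k.2
  have hl : mdot α β (omHat α β ω) l = 0 := l.2
  have hc := collC_split α β ho hk hl
  have hp : ∀ x y : ℝ, pPr α β (x • omHat α β ω + k) (y • omHat α β ω + l) ω =
      (x + cc1 (pZ α β k) (pZ α β l) x y) • omHat α β ω + k := by
    intro x y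
    rw [pPr, hc, add_smul]; abel
  have hq : ∀ x y : ℝ, qPr α β (x • omHat α β ω + k) (y • omHat α β ω + l) ω =
      (y - cc1 (pZ α β k) (pZ α β l) x y) • omHat α β ω + l := by
    intro x y
    rw [qPr, hc, sub_smul]; abel
  simp only [hp, hq, pZ_split α β ho hk, pZ_split α β ho hl]
  refine collision_1d (by linarith [one_le_pZ α β k]) (by linarith [one_le_pZ α β l])
    (fun a b c d => G (a • omHat α β ω + k) (b • omHat α β ω + l)
      (c • omHat α β ω + k) (d • omHat α β ω + l)) ?_
  have : Measurable fun z : (ℝ × ℝ) × ℝ × ℝ =>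
      (((z.1.1 • omHat α β ω + (k : E3), z.1.2 • omHat α β ω + (l : E3)),
      (z.2.1 • omHat α β ω + (k : E3), z.2.2 • omHat α β ω + (l : E3))) :
        (E3 × E3) × E3 × E3) := by
    fun_prop
  exact hG.comp this

/-! ### Gain and loss integrands on the collision configuration space -/

/-- The reference measure `dp dq dω` on collision configurations. -/
noncomputable def collMeas : Measure (E3 × E3 × Metric.sphere (0 : E3) 1) :=
  (volume : Measure E3).prod ((volume : Measure E3).prod sphMeas)

instance instFiniteSph : IsFiniteMeasure sphMeas := by unfold sphMeas; infer_instance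

lemma collision_full {α β : ℝ} (hα : 0 < α) (hβ : 0 < β)
    (G : E3 → E3 → E3 → E3 → ENNReal)
    (hG : Measurable fun z : (E3 × E3) × E3 × E3 => G z.1.1 z.1.2 z.2.1 z.2.2) :
    ∫⁻ z, G z.1 z.2.1 (pPr α β z.1 z.2.1 z.2.2) (qPr α β z.1 z.2.1 z.2.2) *
        ENNReal.ofReal (pZ α β z.1)⁻¹ * ENNReal.ofReal (pZ α β z.2.1)⁻¹ ∂collMeas =
    ∫⁻ z, G (pPr α β z.1 z.2.1 z.2.2) (qPr α β z.1 z.2.1 z.2.2) z.1 z.2.1 *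
        ENNReal.ofReal (pZ α β z.1)⁻¹ * ENNReal.ofReal (pZ α β z.2.1)⁻¹ ∂collMeas := by
  have key : ∀ F : E3 → E3 → Metric.sphere (0 : E3) 1 → ENNReal,
      (Measurable fun z : E3 × E3 × Metric.sphere (0 : E3) 1 => F z.1 z.2.1 z.2.2) →
      ∫⁻ z, F z.1 z.2.1 z.2.2 ∂collMeas = ∫⁻ ω, (∫⁻ p, ∫⁻ q, F p q ω) ∂sphMeas := by
    intro F hF
    unfold collMeas
    rw [lintegral_prod _ hF.aemeasurable]
    have h1 : ∀ p, ∫⁻ y, F p y.1 y.2 ∂((volume : Measure E3).prod sphMeas) =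
        ∫⁻ ω, (∫⁻ q, F p q ω) ∂sphMeas := fun p =>
      lintegral_prod_symm _ (hF.comp measurable_prodMk_left).aemeasurable
    simp only [h1]
    rw [lintegral_lintegral_swap]
    refine Measurable.aemeasurable (Measurable.lintegral_prod_right'
      (f := fun w : (E3 × Metric.sphere (0 : E3) 1) × E3 => F w.1.1 w.2 w.1.2) ?_)
    have : Measurable fun w : (E3 × Metric.sphere (0 : E3) 1) × E3 => (w.1.1, w.2, w.1.2) := by
      fun_prop
    exact hF.comp this
  have m1 : Measurable fun z : E3 × E3 × Metric.sphere (0 : E3) 1 => z.1 := measurable_fst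
  have m2 : Measurable fun z : E3 × E3 × Metric.sphere (0 : E3) 1 => z.2.1 := by fun_prop
  have m3 : Measurable fun z : E3 × E3 × Metric.sphere (0 : E3) 1 => (z.2.2 : E3) := by fun_prop
  have mp := measurable_pPr α β m1 m2 m3
  have mq := measurable_qPr α β m1 m2 m3
  have mw1 := (measurable_pZ α β m1).inv.ennreal_ofReal
  have mw2 := (measurable_pZ α β m2).inv.ennreal_ofReal
  rw [key (fun p q ω => G p q (pPr α β p q ω) (qPr α β p q ω) *
        ENNReal.ofReal (pZ α β p)⁻¹ * ENNReal.ofReal (pZ α β q)⁻¹)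
      (((hG.comp ((m1.prodMk m2).prodMk (mp.prodMk mq))).mul mw1).mul mw2),
    key (fun p q ω => G (pPr α β p q ω) (qPr α β p q ω) p q *
        ENNReal.ofReal (pZ α β p)⁻¹ * ENNReal.ofReal (pZ α β q)⁻¹)
      (((hG.comp ((mp.prodMk mq).prodMk (m1.prodMk m2))).mul mw1).mul mw2)]
  refine lintegral_congr fun ω => ?_
  exact collision_3d hα hβ (ne_zero_of_mem_unit_sphere ω) G hG

/-- The integrand `f(p) g(q) S₀ / (p⁰ q⁰)` of the weighted loss term. -/
noncomputable def lossD (α β : ℝ) (S₀ : E3 → E3 → E3 → E3 → ℝ) (f g : E3 → ℝ)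
    (z : E3 × E3 × Metric.sphere (0 : E3) 1) : ℝ :=
  f z.1 * g z.2.1 * S₀ z.1 z.2.1 (pPr α β z.1 z.2.1 z.2.2) (qPr α β z.1 z.2.1 z.2.2) *
    ((pZ α β z.1)⁻¹ * (pZ α β z.2.1)⁻¹)

/-- The integrand `f(p') g(q') S₀ / (p⁰ q⁰)` of the weighted gain term. -/
noncomputable def gainD (α β : ℝ) (S₀ : E3 → E3 → E3 → E3 → ℝ) (f g : E3 → ℝ)
    (z : E3 × E3 × Metric.sphere (0 : E3) 1) : ℝ :=
  f (pPr α β z.1 z.2.1 z.2.2) * g (qPr α β z.1 z.2.1 z.2.2) *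
    S₀ z.1 z.2.1 (pPr α β z.1 z.2.1 z.2.2) (qPr α β z.1 z.2.1 z.2.2) *
    ((pZ α β z.1)⁻¹ * (pZ α β z.2.1)⁻¹)

section Collision

variable {α β C₁ : ℝ} {S₀ : E3 → E3 → E3 → E3 → ℝ} {f g : E3 → ℝ}

lemma measurable_lossD
    (hS : Measurable fun x : (E3 × E3) × E3 × E3 => S₀ x.1.1 x.1.2 x.2.1 x.2.2)
    (hf : Measurable f) (hg : Measurable g) : Measurable (lossD α β S₀ f g) := by
  have m1 : Measurable fun z : E3 × E3 × Metric.sphere (0 : E3) 1 => z.1 := measurable_fst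
  have m2 : Measurable fun z : E3 × E3 × Metric.sphere (0 : E3) 1 => z.2.1 := by fun_prop
  have m3 : Measurable fun z : E3 × E3 × Metric.sphere (0 : E3) 1 => (z.2.2 : E3) := by fun_prop
  have mp := measurable_pPr α β m1 m2 m3
  have mq := measurable_qPr α β m1 m2 m3
  exact (((hf.comp m1).mul (hg.comp m2)).mul
    (hS.comp ((m1.prodMk m2).prodMk (mp.prodMk mq)))).mul
    ((measurable_pZ α β m1).inv.mul (measurable_pZ α β m2).inv)

lemma measurable_gainD
    (hS : Measurable fun x : (E3 × E3) × E3 × E3 => S₀ x.1.1 x.1.2 x.2.1 x.2.2)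
    (hf : Measurable f) (hg : Measurable g) : Measurable (gainD α β S₀ f g) := by
  have m1 : Measurable fun z : E3 × E3 × Metric.sphere (0 : E3) 1 => z.1 := measurable_fst
  have m2 : Measurable fun z : E3 × E3 × Metric.sphere (0 : E3) 1 => z.2.1 := by fun_prop
  have m3 : Measurable fun z : E3 × E3 × Metric.sphere (0 : E3) 1 => (z.2.2 : E3) := by fun_prop
  have mp := measurable_pPr α β m1 m2 m3
  have mq := measurable_qPr α β m1 m2 m3
  exact (((hf.comp mp).mul (hg.comp mq)).mul
    (hS.comp ((m1.prodMk m2).prodMk (mp.prodMk mq)))).mul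
    ((measurable_pZ α β m1).inv.mul (measurable_pZ α β m2).inv)

/-- Gain and loss integrands have the same integral after applying a positively homogeneous `φ`;
used for the norm, the positive part and the negative part. -/
lemma lintegral_gain_eq_loss (hα : 0 < α) (hβ : 0 < β)
    (hS : Measurable fun x : (E3 × E3) × E3 × E3 => S₀ x.1.1 x.1.2 x.2.1 x.2.2)
    (hsymm : ∀ p q p' q', S₀ p q p' q' = S₀ p' q' p q)
    (hf : Measurable f) (hg : Measurable g) (φ : ℝ → ENNReal) (hφ : Measurable φ)
    (hφ' : ∀ a b, 0 ≤ b → φ (a * b) = φ a * ENNReal.ofReal b) :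
    ∫⁻ z, φ (gainD α β S₀ f g z) ∂collMeas = ∫⁻ z, φ (lossD α β S₀ f g z) ∂collMeas := by
  have hpos : ∀ p : E3, 0 ≤ (pZ α β p)⁻¹ := fun p => inv_nonneg.2 (by linarith [one_le_pZ α β p])
  have hw : ∀ (a : ℝ) (p q : E3), φ (a * ((pZ α β p)⁻¹ * (pZ α β q)⁻¹)) =
      φ a * ENNReal.ofReal (pZ α β p)⁻¹ * ENNReal.ofReal (pZ α β q)⁻¹ := by
    intro a p q
    rw [hφ' _ _ (mul_nonneg (hpos p) (hpos q)), ENNReal.ofReal_mul (hpos p), mul_assoc]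
  simp only [gainD, lossD, hw]
  have h := collision_full hα hβ (fun a b c d => φ (f a * g b * S₀ a b c d)) (by
    refine hφ.comp (((hf.comp ?_).mul (hg.comp ?_)).mul hS)
    · fun_prop
    · fun_prop)
  rw [h]
  refine lintegral_congr fun z => ?_
  rw [hsymm]

lemma abs_lossD_le (hS0 : ∀ p q p' q', 0 ≤ S₀ p q p' q') (hS1 : ∀ p q p' q', S₀ p q p' q' ≤ C₁)
    (z) : ‖lossD α β S₀ f g z‖ ≤ C₁ * (|f z.1| * |g z.2.1|) := by
  have h1 : ∀ p : E3, 0 ≤ (pZ α β p)⁻¹ ∧ (pZ α β p)⁻¹ ≤ 1 := fun p =>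
    ⟨inv_nonneg.2 (by linarith [one_le_pZ α β p]), inv_le_one_of_one_le₀ (one_le_pZ α β p)⟩
  unfold lossD
  rw [Real.norm_eq_abs, abs_mul, abs_mul, abs_mul, abs_of_nonneg (hS0 _ _ _ _),
    abs_of_nonneg (mul_nonneg (h1 _).1 (h1 _).1)]
  calc _ ≤ |f z.1| * |g z.2.1| * C₁ * 1 := by
        have := hS0 0 0 0 0
        have := hS1 0 0 0 0
        have hC : 0 ≤ C₁ := by linarith
        have := mul_nonneg (h1 z.1).1 (h1 z.2.1).1
        gcongr
        · exact hS1 _ _ _ _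
        · exact mul_le_one₀ (h1 _).2 (h1 _).1 (h1 _).2
    _ = _ := by ring

/-- The unit sphere has area `4π`. -/
lemma sph_total : sphMeas.real Set.univ = 4 * Real.pi := by
  unfold sphMeas
  rw [Measure.toSphere_real_apply_univ, Measure.real, EuclideanSpace.volume_ball_fin_three]
  simp
  rw [ENNReal.toReal_ofReal (by positivity)]
  ring

lemma integrable_lossD (hS : Measurable fun x : (E3 × E3) × E3 × E3 => S₀ x.1.1 x.1.2 x.2.1 x.2.2)
    (hS0 : ∀ p q p' q', 0 ≤ S₀ p q p' q') (hS1 : ∀ p q p' q', S₀ p q p' q' ≤ C₁)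
    (hf : Measurable f) (hg : Measurable g) (hfi : Integrable f) (hgi : Integrable g) :
    Integrable (lossD α β S₀ f g) collMeas ∧
    ∫ z, ‖lossD α β S₀ f g z‖ ∂collMeas ≤ 4 * Real.pi * C₁ * ((∫ p, |f p|) * ∫ p, |g p|) := by
  have hI : Integrable (fun z : E3 × E3 × Metric.sphere (0 : E3) 1 =>
      C₁ * (|f z.1| * |g z.2.1|)) collMeas := by
    have := hfi.abs.mul_prod (hgi.abs.mul_prod (integrable_const (μ := sphMeas) (1 : ℝ)))
    simp only [mul_one] at this
    exact this.const_mul C₁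
  have hL : Integrable (lossD α β S₀ f g) collMeas :=
    hI.mono' (measurable_lossD hS hf hg).aestronglyMeasurable
      (Filter.Eventually.of_forall (abs_lossD_le hS0 hS1))
  refine ⟨hL, (integral_mono hL.norm hI (abs_lossD_le hS0 hS1)).trans (le_of_eq ?_)⟩
  rw [integral_const_mul]
  have h2 : ∫ z : E3 × E3 × Metric.sphere (0 : E3) 1, |f z.1| * |g z.2.1| ∂collMeas =
      (∫ p, |f p|) * ((∫ p, |g p|) * (4 * Real.pi)) := by
    have e1 := integral_prod_mul (μ := (volume : Measure E3)) (ν := sphMeas)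
      (fun q => |g q|) (fun _ => (1 : ℝ))
    have e2 := integral_prod_mul (μ := (volume : Measure E3))
      (ν := (volume : Measure E3).prod sphMeas) (fun p => |f p|) (fun y => |g y.1| * 1)
    rw [e1] at e2
    simp only [mul_one, integral_const, sph_total, smul_eq_mul] at e2
    exact e2
  rw [h2]; ring

lemma integrable_gainD (hα : 0 < α) (hβ : 0 < β)
    (hS : Measurable fun x : (E3 × E3) × E3 × E3 => S₀ x.1.1 x.1.2 x.2.1 x.2.2)
    (hS0 : ∀ p q p' q', 0 ≤ S₀ p q p' q') (hS1 : ∀ p q p' q', S₀ p q p' q' ≤ C₁)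
    (hsymm : ∀ p q p' q', S₀ p q p' q' = S₀ p' q' p q)
    (hf : Measurable f) (hg : Measurable g) (hfi : Integrable f) (hgi : Integrable g) :
    Integrable (gainD α β S₀ f g) collMeas ∧
    ∫ z, ‖gainD α β S₀ f g z‖ ∂collMeas ≤ 4 * Real.pi * C₁ * ((∫ p, |f p|) * ∫ p, |g p|) ∧
    ∫ z, gainD α β S₀ f g z ∂collMeas = ∫ z, lossD α β S₀ f g z ∂collMeas := by
  obtain ⟨hL, hLb⟩ := integrable_lossD (α := α) (β := β) hS hS0 hS1 hf hg hfi hgi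
  have hmG := measurable_gainD (α := α) (β := β) hS hf hg
  have hmL := measurable_lossD (α := α) (β := β) hS hf hg
  have he := lintegral_gain_eq_loss hα hβ hS hsymm hf hg (fun x => ‖x‖ₑ) measurable_enorm (by
    intro a b hb
    rw [enorm_mul, Real.enorm_eq_ofReal hb])
  have hG : Integrable (gainD α β S₀ f g) collMeas :=
    ⟨hmG.aestronglyMeasurable, by
      have := hL.2
      rw [HasFiniteIntegral] at this ⊢
      rwa [he]⟩
  refine ⟨hG, ?_, ?_⟩
  · rw [integral_norm_eq_lintegral_enorm hmG.aestronglyMeasurable, he,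
      ← integral_norm_eq_lintegral_enorm hmL.aestronglyMeasurable]
    exact hLb
  · rw [integral_eq_lintegral_pos_part_sub_lintegral_neg_part hG,
      integral_eq_lintegral_pos_part_sub_lintegral_neg_part hL]
    rw [lintegral_gain_eq_loss hα hβ hS hsymm hf hg (fun x => ENNReal.ofReal x)
      ENNReal.measurable_ofReal (fun a b hb => ENNReal.ofReal_mul' hb),
      lintegral_gain_eq_loss hα hβ hS hsymm hf hg (fun x => ENNReal.ofReal (-x))
      (ENNReal.measurable_ofReal.comp measurable_neg) (fun a b hb => by
        rw [← ENNReal.ofReal_mul' hb, neg_mul])]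

/-- Fubini identifies the weighted collision operator with a partial integral over `(q, ω)`. -/
lemma Qcoll_ae (hG : Integrable (gainD α β S₀ f g) collMeas)
    (hL : Integrable (lossD α β S₀ f g) collMeas) :
    (fun p => (pZ α β p)⁻¹ * Qcoll α β S₀ f g p) =ᵐ[volume] fun p =>
      α * β ^ 2 * ∫ y, (gainD α β S₀ f g (p, y) - lossD α β S₀ f g (p, y))
        ∂((volume : Measure E3).prod sphMeas) := by
  filter_upwards [hG.prod_right_ae, hL.prod_right_ae] with p h1 h2
  rw [integral_sub h1 h2, integral_prod _ h1, integral_prod _ h2]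
  unfold Qcoll Qplus Qminus gainD lossD
  simp only [integral_mul_const]
  have hre : ∀ F : E3 → ℝ, ∫ q, F q * ((pZ α β p)⁻¹ * (pZ α β q)⁻¹) =
      (pZ α β p)⁻¹ * ∫ q, (pZ α β q)⁻¹ * F q := by
    intro F
    rw [← integral_const_mul]
    congr 1; ext q; ring
  rw [hre, hre]
  ring

end Collision

/-! ### Lipschitz estimate, mass conservation and homogeneity of the collision operator -/

/-- The weighted collision operator `f ↦ Q(f,f)/p⁰` is locally Lipschitz in `L¹`, because each
of its gain and loss parts is a bilinear map with norm at most `C = 4πC₁αβ²`. -/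
lemma Q_lipschitz {α β C₁ : ℝ} {S₀ : E3 → E3 → E3 → E3 → ℝ} (hα : 0 < α) (hβ : 0 < β)
    (hS : Measurable fun x : (E3 × E3) × E3 × E3 => S₀ x.1.1 x.1.2 x.2.1 x.2.2)
    (hS0 : ∀ p q p' q', 0 ≤ S₀ p q p' q') (hS1 : ∀ p q p' q', S₀ p q p' q' ≤ C₁)
    (hsymm : ∀ p q p' q', S₀ p q p' q' = S₀ p' q' p q) {f g : E3 → ℝ}
    (hf : Measurable f) (hg : Measurable g) (hfi : Integrable f) (hgi : Integrable g) :
    ∫ p, |(pZ α β p)⁻¹ * Qcoll α β S₀ f f p - (pZ α β p)⁻¹ * Qcoll α β S₀ g g p| ≤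
      2 * (4 * Real.pi * C₁ * α * β ^ 2) * ((∫ p, |f p|) + ∫ p, |g p|) * ∫ p, |f p - g p| := by
  have hd : Measurable (fun p => f p - g p) := hf.sub hg
  have hdi : Integrable (fun p => f p - g p) := hfi.sub hgi
  obtain ⟨gff, -, -⟩ := integrable_gainD hα hβ hS hS0 hS1 hsymm hf hf hfi hfi
  obtain ⟨ggg, -, -⟩ := integrable_gainD hα hβ hS hS0 hS1 hsymm hg hg hgi hgi
  obtain ⟨g1, g1b, -⟩ := integrable_gainD hα hβ hS hS0 hS1 hsymm hf hd hfi hdi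
  obtain ⟨g2, g2b, -⟩ := integrable_gainD hα hβ hS hS0 hS1 hsymm hd hg hdi hgi
  obtain ⟨lff, -⟩ := integrable_lossD (α := α) (β := β) hS hS0 hS1 hf hf hfi hfi
  obtain ⟨lgg, -⟩ := integrable_lossD (α := α) (β := β) hS hS0 hS1 hg hg hgi hgi
  obtain ⟨l1, l1b⟩ := integrable_lossD (α := α) (β := β) hS hS0 hS1 hf hd hfi hdi
  obtain ⟨l2, l2b⟩ := integrable_lossD (α := α) (β := β) hS hS0 hS1 hd hg hdi hgi
  let d : E3 → ℝ := fun p => f p - g p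
  let R : E3 × E3 × Metric.sphere (0 : E3) 1 → ℝ := fun z =>
    (gainD α β S₀ f f z - lossD α β S₀ f f z) - (gainD α β S₀ g g z - lossD α β S₀ g g z)
  have hR : Integrable R collMeas := (gff.sub lff).sub (ggg.sub lgg)
  -- Polarization: `f ⊗ f - g ⊗ g = f ⊗ (f - g) + (f - g) ⊗ g` in both the gain and the loss part.
  have hRle : ∀ z, ‖R z‖ ≤ ‖gainD α β S₀ f d z‖ + ‖gainD α β S₀ d g z‖ +
      (‖lossD α β S₀ f d z‖ + ‖lossD α β S₀ d g z‖) := by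
    intro z
    have : R z = (gainD α β S₀ f d z + gainD α β S₀ d g z) -
        (lossD α β S₀ f d z + lossD α β S₀ d g z) := by
      simp only [R, d, gainD, lossD]; ring
    rw [this]
    exact (norm_sub_le _ _).trans (add_le_add (norm_add_le _ _) (norm_add_le _ _))
  have hRb : ∫ z, ‖R z‖ ∂collMeas ≤
      2 * (4 * Real.pi * C₁) * ((∫ p, |f p|) + ∫ p, |g p|) * ∫ p, |f p - g p| := by
    refine (integral_mono hR.norm ((g1.norm.add g2.norm).add (l1.norm.add l2.norm)) hRle).trans ?_
    have e : ∫ z, ((fun z => ‖gainD α β S₀ f d z‖) + (fun z => ‖gainD α β S₀ d g z‖) +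
      ((fun z => ‖lossD α β S₀ f d z‖) + (fun z => ‖lossD α β S₀ d g z‖))) z ∂collMeas =
      (∫ z, ‖gainD α β S₀ f d z‖ ∂collMeas) + (∫ z, ‖gainD α β S₀ d g z‖ ∂collMeas) +
      ((∫ z, ‖lossD α β S₀ f d z‖ ∂collMeas) + (∫ z, ‖lossD α β S₀ d g z‖ ∂collMeas)) := by
      rw [integral_add' (g1.norm.add g2.norm) (l1.norm.add l2.norm),
        integral_add' g1.norm g2.norm, integral_add' l1.norm l2.norm]
    refine e.le.trans ?_
    linarith
  have hae : ∀ᵐ p : E3, |(pZ α β p)⁻¹ * Qcoll α β S₀ f f p - (pZ α β p)⁻¹ * Qcoll α β S₀ g g p| ≤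
      α * β ^ 2 * ∫ y, ‖R (p, y)‖ ∂((volume : Measure E3).prod sphMeas) := by
    filter_upwards [Qcoll_ae gff lff, Qcoll_ae ggg lgg, (gff.sub lff).prod_right_ae,
      (ggg.sub lgg).prod_right_ae] with p h1 h2 h3 h4
    simp only [Pi.sub_apply] at h3 h4
    rw [h1, h2, ← mul_sub, ← integral_sub h3 h4, abs_mul, abs_of_pos (by positivity)]
    gcongr
    exact norm_integral_le_integral_norm (fun y => R (p, y))
  have hRi : Integrable fun p => α * β ^ 2 *
      ∫ y, ‖R (p, y)‖ ∂((volume : Measure E3).prod sphMeas) :=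
    (Integrable.integral_norm_prod_left hR).const_mul _
  refine (integral_mono_of_nonneg (Filter.Eventually.of_forall fun p => abs_nonneg _)
    hRi hae).trans ?_
  have hF : ∫ z, ‖R z‖ ∂collMeas =
      ∫ p, ∫ y, ‖R (p, y)‖ ∂((volume : Measure E3).prod sphMeas) := integral_prod _ hR.norm
  rw [integral_const_mul, ← hF]
  calc _ ≤ α * β ^ 2 * (2 * (4 * Real.pi * C₁) * ((∫ p, |f p|) + ∫ p, |g p|) *
        ∫ p, |f p - g p|) := by gcongr
    _ = _ := by ring

/-- Conservation of mass: gain and loss have the same total integral, by the exchange symmetry. -/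
lemma Q_mass {α β C₁ : ℝ} {S₀ : E3 → E3 → E3 → E3 → ℝ} (hα : 0 < α) (hβ : 0 < β)
    (hS : Measurable fun x : (E3 × E3) × E3 × E3 => S₀ x.1.1 x.1.2 x.2.1 x.2.2)
    (hS0 : ∀ p q p' q', 0 ≤ S₀ p q p' q') (hS1 : ∀ p q p' q', S₀ p q p' q' ≤ C₁)
    (hsymm : ∀ p q p' q', S₀ p q p' q' = S₀ p' q' p q) {f : E3 → ℝ}
    (hf : Measurable f) (hfi : Integrable f) :
    ∫ p, (pZ α β p)⁻¹ * Qcoll α β S₀ f f p = 0 := by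
  obtain ⟨hG, -, hGL⟩ := integrable_gainD hα hβ hS hS0 hS1 hsymm hf hf hfi hfi
  obtain ⟨hL, -⟩ := integrable_lossD (α := α) (β := β) hS hS0 hS1 hf hf hfi hfi
  rw [integral_congr_ae (Qcoll_ae hG hL), integral_const_mul]
  have h : ∫ z, (gainD α β S₀ f f z - lossD α β S₀ f f z) ∂collMeas =
      ∫ p, ∫ y, (gainD α β S₀ f f (p, y) - lossD α β S₀ f f (p, y))
        ∂((volume : Measure E3).prod sphMeas) := integral_prod _ (hG.sub hL)
  rw [← h, integral_sub hG hL, hGL, sub_self, mul_zero]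

lemma Qcoll_smul (α β : ℝ) (S₀ : E3 → E3 → E3 → E3 → ℝ) (c : ℝ) (f : E3 → ℝ) (p : E3) :
    Qcoll α β S₀ (fun p => c * f p) (fun p => c * f p) p = c ^ 2 * Qcoll α β S₀ f f p := by
  have h : ∀ a b s : ℝ, c * a * (c * b) * s = c ^ 2 * (a * b * s) := by intros; ring
  have h' : ∀ a b : ℝ, a * (c ^ 2 * b) = c ^ 2 * (a * b) := by intros; ring
  simp only [Qcoll, Qplus, Qminus, h, integral_const_mul, h']
  ring

theorem statement_12
    (C₀ C₁ α β : ℝ) (hC₀ : 0 < C₀) (hC₁ : 0 < C₁) (hα : C₀ ≤ α) (hβ : C₀ ≤ β)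
    (S₀ : E3 → E3 → E3 → E3 → ℝ)
    (hS₀meas : Measurable fun x : (E3 × E3) × E3 × E3 => S₀ x.1.1 x.1.2 x.2.1 x.2.2)
    (hS₀nonneg : ∀ p q p' q', 0 ≤ S₀ p q p' q')
    (hS₀bdd : ∀ p q p' q', S₀ p q p' q' ≤ C₁)
    (hS₀symm : ∀ p q p' q', S₀ p q p' q' = S₀ p' q' p q)
    (r : ℝ) (hr : 0 < r) (n : ℕ)
    (hn4 : 4 ≤ n) (hn1 : (1 + 4 * Real.pi * C₁ * α * β ^ 2 * r) / Real.sqrt n ≤ 1)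
    (hn2 : 3 * (4 * Real.pi * C₁ * α * β ^ 2) * r * (1 + 4 * Real.pi * C₁ * α * β ^ 2 * r) / Real.sqrt n ≤ 1 / 2)
    (u v wu : L1) (hu : memX r u) (hv : memX r v) (hwu : memX r wu)
    (hequ : (fun p : E3 => Real.sqrt n * wu p - (pZ α β p)⁻¹ * Qcoll α β S₀ (⇑wu) (⇑wu) p)
      =ᵐ[volume] ⇑u) :
    ∫ p : E3, |((n : ℝ) * Real.sqrt n * wu p - (n : ℝ) * u p) -
        (pZ α β p)⁻¹ * Qcoll α β S₀ (⇑v) (⇑v) p| ≤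
      4 * (4 * Real.pi * C₁ * α * β ^ 2) * r * (2 * (4 * Real.pi * C₁ * α * β ^ 2) * r ^ 2 / n + ‖u - v‖) := by
  have hα' : 0 < α := hC₀.trans_le hα
  have hβ' : 0 < β := hC₀.trans_le hβ
  have hn : (0 : ℝ) < n := by
    have : 0 < n := by omega
    exact_mod_cast this
  set s := Real.sqrt n with hs
  have hs0 : 0 < s := Real.sqrt_pos.2 hn
  have hss : s ^ 2 = n := Real.sq_sqrt hn.le
  set C := 4 * Real.pi * C₁ * α * β ^ 2 with hC
  have hCpos : 0 < C := by positivity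
  have mu : Measurable (⇑u) := (Lp.stronglyMeasurable u).measurable
  have mv : Measurable (⇑v) := (Lp.stronglyMeasurable v).measurable
  have mw : Measurable (⇑wu) := (Lp.stronglyMeasurable wu).measurable
  have iu : Integrable (⇑u) := L1.integrable_coeFn u
  have iv : Integrable (⇑v) := L1.integrable_coeFn v
  have iw : Integrable (⇑wu) := L1.integrable_coeFn wu
  have nrm : ∀ f : L1, ∫ p, |f p| = ‖f‖ := fun f => (L1.norm_eq_integral_norm f).symm
  have mF : Measurable fun p => s * wu p := mw.const_mul s
  have iF : Integrable fun p => s * wu p := iw.const_mul s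
  have hFn : ∫ p, |s * wu p| = s * ‖wu‖ := by
    simp only [abs_mul, abs_of_pos hs0]
    rw [integral_const_mul, nrm]
  have hdiff : (fun p => s * wu p - u p) =ᵐ[volume]
      fun p => (pZ α β p)⁻¹ * Qcoll α β S₀ wu wu p := by
    filter_upwards [hequ] with p hp
    rw [← hp]; ring
  -- Mass conservation turns the equation for `wu` into `√n ‖wu‖ = ‖u‖`.
  have hmass : s * ‖wu‖ = ‖u‖ := by
    have h1 := (integral_congr_ae hdiff).trans
      (Q_mass hα' hβ' hS₀meas hS₀nonneg hS₀bdd hS₀symm mw iw)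
    rw [integral_sub iF iu, integral_const_mul] at h1
    have hw : ∫ p, wu p = ‖wu‖ := by
      rw [← nrm]
      refine integral_congr_ae ?_
      filter_upwards [hwu.1] with p hp
      exact (abs_of_nonneg hp).symm
    have hu' : ∫ p, u p = ‖u‖ := by
      rw [← nrm]
      refine integral_congr_ae ?_
      filter_upwards [hu.1] with p hp
      exact (abs_of_nonneg hp).symm
    rw [hw, hu'] at h1
    linarith
  have hsw : s * ‖wu‖ ≤ r := hmass.trans_le hu.2
  have hFu : ∫ p, |s * wu p - u p| ≤ 2 * C * r ^ 2 / n := by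
    have h0 := Q_lipschitz hα' hβ' hS₀meas hS₀nonneg hS₀bdd hS₀symm mw
      (measurable_const (a := (0 : ℝ))) iw (integrable_zero _ _ _)
    have hz : ∀ p, Qcoll α β S₀ (fun _ => (0 : ℝ)) (fun _ => 0) p = 0 := by
      intro p; simp [Qcoll, Qplus, Qminus]
    simp only [hz, mul_zero, sub_zero, abs_zero, integral_zero, add_zero, nrm, ← hC] at h0
    have h1 : ∫ p, |s * wu p - u p| = ∫ p, |(pZ α β p)⁻¹ * Qcoll α β S₀ wu wu p| := by
      refine integral_congr_ae ?_
      filter_upwards [hdiff] with p hp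
      rw [hp]
    rw [h1]
    refine h0.trans ?_
    rw [le_div_iff₀ hn, ← hss]
    have h2 : (s * ‖wu‖) ^ 2 ≤ r ^ 2 := by gcongr
    calc 2 * C * ‖wu‖ * ‖wu‖ * s ^ 2 = 2 * C * (s * ‖wu‖) ^ 2 := by ring
      _ ≤ 2 * C * r ^ 2 := by gcongr
  have huv : ∫ p, |u p - v p| = ‖u - v‖ := by
    rw [← nrm]
    refine integral_congr_ae ?_
    filter_upwards [Lp.coeFn_sub u v] with p hp
    rw [hp]; rfl
  have hFv : ∫ p, |s * wu p - v p| ≤ 2 * C * r ^ 2 / n + ‖u - v‖ := by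
    rw [← huv]
    refine le_trans ?_ (add_le_add_left hFu _)
    have i1 : Integrable fun p => |s * wu p - u p| := (iF.sub iu).abs
    have i2 : Integrable fun p => |u p - v p| := (iu.sub iv).abs
    have i3 : Integrable fun p => |s * wu p - v p| := (iF.sub iv).abs
    rw [← integral_add i1 i2]
    exact integral_mono i3 (i1.add i2) fun p => abs_sub_le _ _ _
  -- By homogeneity `Q_n(u,u) = n Q(wu,wu)/p⁰ = Q(√n wu, √n wu)/p⁰`.
  have hmain : ∫ p : E3, |((n : ℝ) * s * wu p - (n : ℝ) * u p) -
        (pZ α β p)⁻¹ * Qcoll α β S₀ (⇑v) (⇑v) p| =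
      ∫ p, |(pZ α β p)⁻¹ * Qcoll α β S₀ (fun p => s * wu p) (fun p => s * wu p) p -
        (pZ α β p)⁻¹ * Qcoll α β S₀ v v p| := by
    refine integral_congr_ae ?_
    filter_upwards [hdiff] with p hp
    rw [Qcoll_smul, hss, mul_assoc, ← mul_sub, hp, mul_left_comm]
  rw [hmain]
  refine (Q_lipschitz hα' hβ' hS₀meas hS₀nonneg hS₀bdd hS₀symm mF mv iF iv).trans ?_
  rw [hFn, nrm, ← hC]
  have hsum : s * ‖wu‖ + ‖v‖ ≤ 2 * r := by linarith [hv.2]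
  calc 2 * C * (s * ‖wu‖ + ‖v‖) * ∫ p, |s * wu p - v p|
      ≤ 2 * C * (2 * r) * (2 * C * r ^ 2 / n + ‖u - v‖) := by gcongr
    _ = _ := by ring
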